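/- Let r ≥ 2 be an integer and let G be a K_{r+1}-saturated simple graph on a finite vertex set. For each vertex v of G, let f(v) be the number of unordered pairs {x, y} of distinct non-adjacent vertices with x, y ∈ N(v) such that the subgraph of G induced on N(x) ∩ N(y) ∩ N(v) contains a clique of size r-2. Then (r-1)·m̄ ≤ ∑_{v ∈ V(G)} f(v), where m̄ is the number of unordered pairs of distinct non-adjacent vertices of G (the number of edges of the complement of G). -/

import Mathlib

open SimpleGraph

/-- A graph `G` is `K_r`-saturated if it contains no `r`-clique, but adding any edge
between distinct non-adjacent vertices creates an `r`-clique. -/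
def IsKSaturated {V : Type*} (r : ℕ) (G : SimpleGraph V) : Prop :=
  G.CliqueFree r ∧ ∀ u v : V, u ≠ v → ¬ G.Adj u v →
    ¬ (G ⊔ SimpleGraph.fromEdgeSet {s(u, v)}).CliqueFree r

/-- `f G r v` is the number of unordered pairs `{x, y}` of distinct non-adjacent vertices
with `x, y ∈ N(v)` such that the subgraph of `G` induced on `N(x) ∩ N(y) ∩ N(v)`
contains a clique of size `r - 2`. -/
noncomputable def f {V : Type*} (G : SimpleGraph V) (r : ℕ) (v : V) : ℕ :=
  Set.ncard {e : Sym2 V | ∃ x y : V, e = s(x, y) ∧ x ≠ y ∧ ¬ G.Adj x y ∧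
    G.Adj v x ∧ G.Adj v y ∧
    ¬ (G.induce (G.neighborSet x ∩ G.neighborSet y ∩ G.neighborSet v)).CliqueFree (r - 2)}

/-!
A `K_{r+1}` created by joining two non-adjacent vertices `x`, `y` consists of `x`, `y` and a clique
`t` of `r - 1` common neighbours of `x` and `y`. For each `v ∈ t` the other `r - 2` vertices of `t`
lie in `N(x) ∩ N(y) ∩ N(v)`, so `{x, y}` contributes to `f v`. Hence every non-edge contributes to
at least `r - 1` of the values `f v`, and the bound follows by double counting.
-/

section DoubleCounting

variable {α β : Type*} [Fintype α] {A : α → Set β} {S : Set β} {m : ℕ}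

theorem mul_ncard_le_sum_ncard (hA : ∀ a, (A a).Finite)
    (hm : ∀ b ∈ S, m ≤ {a | b ∈ A a}.ncard) : m * S.ncard ≤ ∑ a, (A a).ncard := by
  classical
  obtain hS | hS := S.infinite_or_finite
  · simp [hS.ncard]
  let incident (b : β) (a : α) : Prop := b ∈ A a
  calc m * S.ncard
      = hS.toFinset.card • m := by rw [Set.ncard_eq_toFinset_card S hS, smul_eq_mul, mul_comm]
    _ ≤ ∑ b ∈ hS.toFinset, (Finset.univ.bipartiteAbove incident b).card := by
      refine Finset.card_nsmul_le_sum _ _ _ fun b hb ↦ ?_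
      rw [← Set.ncard_coe_finset, Finset.coe_bipartiteAbove]
      simpa [incident] using hm b (hS.mem_toFinset.mp hb)
    _ = ∑ a, (hS.toFinset.bipartiteBelow incident a).card :=
      Finset.sum_card_bipartiteAbove_eq_sum_card_bipartiteBelow incident
    _ ≤ ∑ a, (A a).ncard := by
      refine Finset.sum_le_sum fun a _ ↦ ?_
      rw [← Set.ncard_coe_finset]
      exact Set.ncard_le_ncard (fun b hb ↦ (Finset.mem_bipartiteBelow incident |>.mp hb).2) (hA a)

end DoubleCounting

section Saturation

variable {V : Type*} {G : SimpleGraph V} {n : ℕ} {s : Set V} {t : Finset V} {v x y : V}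

theorem IsKSaturated.maximal_cliqueFree (hG : IsKSaturated n G) :
    Maximal (fun H : SimpleGraph V ↦ H.CliqueFree n) G := by
  refine ⟨hG.1, fun H hH hGH u v huv ↦ ?_⟩
  by_contra hnadj
  have hle : G ⊔ edge u v ≤ H := sup_le hGH (H.edge_le_iff.mpr (.inr huv))
  exact hG.2 u v huv.ne hnadj (hH.anti hle)

theorem exists_isNClique_subset_commonNeighbors
    (hG : Maximal (fun H : SimpleGraph V ↦ H.CliqueFree (n + 2)) G) (hne : x ≠ y)
    (hnadj : ¬ G.Adj x y) :
    ∃ t : Finset V, G.IsNClique n t ∧ (t : Set V) ⊆ G.commonNeighbors x y := by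
  classical
  obtain ⟨t, hx, hy, hxt, hyt⟩ := exists_of_maximal_cliqueFree_not_adj hG hne hnadj
  have ht : G.IsNClique n t := by
    simpa [Finset.erase_insert hx] using hxt.erase_of_mem (Finset.mem_insert_self x t)
  have adj_of_insert {z : V} (hz : z ∉ t) (hzt : G.IsNClique (n + 1) (insert z t)) :
      ∀ w ∈ t, G.Adj z w :=
    ((isClique_insert_of_notMem hz).mp (Finset.coe_insert z t ▸ hzt.isClique)).2
  exact ⟨t, ht, fun w hw ↦ ⟨adj_of_insert hx hxt w hw, adj_of_insert hy hyt w hw⟩⟩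

theorem not_cliqueFree_induce_inter_neighborSet (ht : G.IsNClique (n + 1) t)
    (hts : (t : Set V) ⊆ s) (hv : v ∈ t) :
    ¬ (G.induce (s ∩ G.neighborSet v)).CliqueFree n := by
  classical
  rw [cliqueFree_induce_iff]
  refine fun hfree ↦ hfree (fun u hu ↦ ?_) (ht.erase_of_mem hv)
  obtain ⟨huv, hut⟩ := Finset.mem_erase.mp hu
  exact ⟨hts hut, ht.isClique hv hut huv.symm⟩

/-- The non-edges `e` of `G` counted by `f G r v`: those for which some copy of `K_{r+1}` minus an
edge in `G` has `e` as its missing edge and `v` as one of its other vertices. -/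
def missingEdges (G : SimpleGraph V) (r : ℕ) (v : V) : Set (Sym2 V) :=
  {e | ∃ x y : V, e = s(x, y) ∧ x ≠ y ∧ ¬ G.Adj x y ∧ G.Adj v x ∧ G.Adj v y ∧
    ¬ (G.induce (G.neighborSet x ∩ G.neighborSet y ∩ G.neighborSet v)).CliqueFree (r - 2)}

theorem f_eq_ncard_missingEdges (G : SimpleGraph V) (r : ℕ) (v : V) :
    f G r v = (missingEdges G r v).ncard := rfl

theorem mk_mem_missingEdges (hne : x ≠ y) (hnadj : ¬ G.Adj x y) (ht : G.IsNClique (n + 1) t)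
    (hts : (t : Set V) ⊆ G.commonNeighbors x y) (hv : v ∈ t) :
    s(x, y) ∈ missingEdges G (n + 2) v :=
  ⟨x, y, rfl, hne, hnadj, (hts hv).1.symm, (hts hv).2.symm,
    not_cliqueFree_induce_inter_neighborSet ht hts hv⟩

theorem IsKSaturated.le_ncard_setOf_mem_missingEdges [Finite V] (hG : IsKSaturated (n + 3) G)
    {e : Sym2 V} (he : e ∈ Gᶜ.edgeSet) : n + 1 ≤ {v | e ∈ missingEdges G (n + 2) v}.ncard := by
  induction e using Sym2.ind with | _ x y
  obtain ⟨hne, hnadj⟩ := (G.compl_adj x y).mp he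
  obtain ⟨t, ht, hts⟩ := exists_isNClique_subset_commonNeighbors hG.maximal_cliqueFree hne hnadj
  rw [← ht.card_eq, ← Set.ncard_coe_finset]
  exact Set.ncard_le_ncard fun v hv ↦ mk_mem_missingEdges hne hnadj ht hts hv

end Saturation

theorem stmt_8 {V : Type*} [Fintype V] (r : ℕ) (hr : 2 ≤ r)
    (G : SimpleGraph V) (hsat : IsKSaturated (r + 1) G) :
    (r - 1) * Set.ncard (Gᶜ).edgeSet ≤ ∑ v : V, f G r v := by
  obtain ⟨n, rfl⟩ := Nat.exists_eq_add_of_le' hr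
  simp only [f_eq_ncard_missingEdges]
  exact mul_ncard_le_sum_ncard (fun v ↦ Set.toFinite _)
    fun e he ↦ hsat.le_ncard_setOf_mem_missingEdges he
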